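/- If two 0-chains γx and γy satisfy: (i) (x,y) = γx + γy as 0-chains; (ii) for every σ ∈ G_x, the 0-chain σ·γx − γx cancels decoupled fractions; and (iii) for every σ ∈ G_y, the 0-chain σ·γy − γy cancels decoupled fractions, then (γx, γy) is a pseudo-decoupling of (x,y). -/

import Mathlib

open IntermediateField
open scoped BigOperators Classical

set_option synthInstance.maxHeartbeats 1000000
set_option maxHeartbeats 1600000

noncomputable section

namespace QuadrantWalk

variable {K : Type} [Field K] [Algebra ℂ K]

/-- Evaluation of the step (Laurent) polynomial `S(X,Y) = ∑ w_{i,j} X^i Y^j`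
    at a pair of elements of a field. -/
def stepEval (St : Finset (ℤ × ℤ)) (w : ℤ × ℤ → ℂ) (u v : K) : K :=
  ∑ p ∈ St, algebraMap ℂ K (w p) * u ^ p.1 * v ^ p.2

/-- The step polynomial involves both `X` and `Y`. -/
def NotUnivariate (St : Finset (ℤ × ℤ)) : Prop :=
  (∃ p ∈ St, ∃ q ∈ St, p.1 ≠ q.1) ∧ ∃ p ∈ St, ∃ q ∈ St, p.2 ≠ q.2

/-- The kernel polynomial `K̃(X,Y,t) = X^mx * Y^my * (1 - t·S(X,Y))` as an element of
`ℂ[X,Y,t]`, with variables `0 ↦ X`, `1 ↦ Y`, `2 ↦ t`. -/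
def kernelPoly (St : Finset (ℤ × ℤ)) (w : ℤ × ℤ → ℂ) (mx my : ℕ) :
    MvPolynomial (Fin 3) ℂ :=
  MvPolynomial.X 0 ^ mx * MvPolynomial.X 1 ^ my -
    MvPolynomial.X 2 *
      ∑ p ∈ St, MvPolynomial.C (w p) *
        MvPolynomial.X 0 ^ (p.1 + (mx : ℤ)).toNat *
        MvPolynomial.X 1 ^ (p.2 + (my : ℤ)).toNat

/-- `-mx` (resp. `-my`) is the smallest `X`-exponent (resp. `Y`-exponent) of the model. -/
structure ExponentBounds (St : Finset (ℤ × ℤ)) (mx my : ℕ) : Prop where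
  lowerX : ∀ p ∈ St, -(mx : ℤ) ≤ p.1
  lowerY : ∀ p ∈ St, -(my : ℤ) ≤ p.2
  attainX : ∃ p ∈ St, p.1 = -(mx : ℤ)
  attainY : ∃ p ∈ St, p.2 = -(my : ℤ)

/-- `x`-adjacency : equal first coordinates and equal values of `S`. -/
def XAdj (St : Finset (ℤ × ℤ)) (w : ℤ × ℤ → ℂ) (a b : K × K) : Prop :=
  a.1 = b.1 ∧ stepEval St w a.1 a.2 = stepEval St w b.1 b.2

/-- `y`-adjacency : equal second coordinates and equal values of `S`. -/
def YAdj (St : Finset (ℤ × ℤ)) (w : ℤ × ℤ → ℂ) (a b : K × K) : Prop :=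
  a.2 = b.2 ∧ stepEval St w a.1 a.2 = stepEval St w b.1 b.2

/-- Adjacency. -/
def Adj (St : Finset (ℤ × ℤ)) (w : ℤ × ℤ → ℂ) (a b : K × K) : Prop :=
  XAdj St w a b ∨ YAdj St w a b

/-- The orbit of the walk: the equivalence class of `(x,y)` under the
reflexive-transitive closure of adjacency. -/
def orbit (St : Finset (ℤ × ℤ)) (w : ℤ × ℤ → ℂ) (x y : K) : Set (K × K) :=
  {a | Relation.ReflTransGen (Adj St w) (x, y) a}

/-- `k = ℂ(S(x,y))`. -/
def kF (St : Finset (ℤ × ℤ)) (w : ℤ × ℤ → ℂ) (x y : K) : IntermediateField ℂ K :=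
  adjoin ℂ {stepEval St w x y}

/-- `k(x) = ℂ(x, S(x,y))`. -/
def kxF (St : Finset (ℤ × ℤ)) (w : ℤ × ℤ → ℂ) (x y : K) : IntermediateField ℂ K :=
  adjoin ℂ {x, stepEval St w x y}

/-- `k(y) = ℂ(y, S(x,y))`. -/
def kyF (St : Finset (ℤ × ℤ)) (w : ℤ × ℤ → ℂ) (x y : K) : IntermediateField ℂ K :=
  adjoin ℂ {y, stepEval St w x y}

/-- `k(x,y) = ℂ(x,y)`. -/
def kxyF (x y : K) : IntermediateField ℂ K := adjoin ℂ {x, y}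

/-- `k(𝒪)`: the subfield generated over `k` by all coordinates of the orbit. -/
def orbitF (St : Finset (ℤ × ℤ)) (w : ℤ × ℤ → ℂ) (x y : K) : IntermediateField ℂ K :=
  adjoin ℂ ({stepEval St w x y} ∪ {z | ∃ a ∈ orbit St w x y, z = a.1 ∨ z = a.2})

/-- The standing hypotheses: nonzero weights, a non-univariate step polynomial,
`x, y` algebraically independent over `ℂ`, and `𝕂` an algebraic closure of `ℂ(x,y)`. -/
structure Setting (St : Finset (ℤ × ℤ)) (w : ℤ × ℤ → ℂ) (x y : K) : Prop where
  weight_ne : ∀ p ∈ St, w p ≠ 0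
  notUniv : NotUnivariate St
  indep : AlgebraicIndependent ℂ ![x, y]
  algClosed : IsAlgClosed K
  algebraic : Algebra.IsAlgebraic (kxyF x y) K

lemma self_mem_orbit (St : Finset (ℤ × ℤ)) (w : ℤ × ℤ → ℂ) (x y : K) :
    (x, y) ∈ orbit St w x y := Relation.ReflTransGen.refl

lemma x_mem_orbitF (St : Finset (ℤ × ℤ)) (w : ℤ × ℤ → ℂ) (x y : K) :
    x ∈ orbitF St w x y := by
  apply subset_adjoin
  exact Set.mem_union_right _ ⟨(x, y), self_mem_orbit St w x y, Or.inl rfl⟩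

lemma y_mem_orbitF (St : Finset (ℤ × ℤ)) (w : ℤ × ℤ → ℂ) (x y : K) :
    y ∈ orbitF St w x y := by
  apply subset_adjoin
  exact Set.mem_union_right _ ⟨(x, y), self_mem_orbit St w x y, Or.inr rfl⟩

lemma S_mem_orbitF (St : Finset (ℤ × ℤ)) (w : ℤ × ℤ → ℂ) (x y : K) :
    stepEval St w x y ∈ orbitF St w x y := by
  apply subset_adjoin
  exact Set.mem_union_left _ rfl

lemma x_mem_kxF (St : Finset (ℤ × ℤ)) (w : ℤ × ℤ → ℂ) (x y : K) :
    x ∈ kxF St w x y :=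
  subset_adjoin ℂ _ (Set.mem_insert _ _)

lemma S_mem_kxF (St : Finset (ℤ × ℤ)) (w : ℤ × ℤ → ℂ) (x y : K) :
    stepEval St w x y ∈ kxF St w x y :=
  subset_adjoin ℂ _ (Set.mem_insert_of_mem _ rfl)

lemma y_mem_kyF (St : Finset (ℤ × ℤ)) (w : ℤ × ℤ → ℂ) (x y : K) :
    y ∈ kyF St w x y :=
  subset_adjoin ℂ _ (Set.mem_insert _ _)

lemma S_mem_kyF (St : Finset (ℤ × ℤ)) (w : ℤ × ℤ → ℂ) (x y : K) :
    stepEval St w x y ∈ kyF St w x y :=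
  subset_adjoin ℂ _ (Set.mem_insert_of_mem _ rfl)

/-- The subgroup of `ℂ`-automorphisms of `M` fixing the subfield `E` pointwise. -/
def fixingAuts (E M : IntermediateField ℂ K) : Subgroup (↥M ≃ₐ[ℂ] ↥M) where
  carrier := {σ | ∀ (z : K) (_ : z ∈ E) (hzM : z ∈ M), σ ⟨z, hzM⟩ = ⟨z, hzM⟩}
  one_mem' := fun _ _ _ => rfl
  mul_mem' := by
    intro σ τ hσ hτ z hzE hzM
    show σ (τ ⟨z, hzM⟩) = ⟨z, hzM⟩
    rw [hτ z hzE hzM, hσ z hzE hzM]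
  inv_mem' := by
    intro σ hσ z hzE hzM
    show σ.symm ⟨z, hzM⟩ = ⟨z, hzM⟩
    conv_lhs => rw [← hσ z hzE hzM]
    exact σ.symm_apply_apply _

/-- The Galois group `G_x = Gal(k(𝒪)|k(x))`. -/
def Gx (St : Finset (ℤ × ℤ)) (w : ℤ × ℤ → ℂ) (x y : K) :
    Subgroup (↥(orbitF St w x y) ≃ₐ[ℂ] ↥(orbitF St w x y)) :=
  fixingAuts (kxF St w x y) (orbitF St w x y)

/-- The Galois group `G_y = Gal(k(𝒪)|k(y))`. -/
def Gy (St : Finset (ℤ × ℤ)) (w : ℤ × ℤ → ℂ) (x y : K) :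
    Subgroup (↥(orbitF St w x y) ≃ₐ[ℂ] ↥(orbitF St w x y)) :=
  fixingAuts (kyF St w x y) (orbitF St w x y)

/-- The Galois group `G_{xy} = Gal(k(𝒪)|k(x,y))`. -/
def Gxy (St : Finset (ℤ × ℤ)) (w : ℤ × ℤ → ℂ) (x y : K) :
    Subgroup (↥(orbitF St w x y) ≃ₐ[ℂ] ↥(orbitF St w x y)) :=
  fixingAuts (kxyF x y) (orbitF St w x y)

/-- Extend an automorphism of an intermediate field to a map on all of `K`
(by the identity outside). -/
def extendAut {M : IntermediateField ℂ K} (σ : ↥M ≃ₐ[ℂ] ↥M) (z : K) : K :=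
  if h : z ∈ M then (σ ⟨z, h⟩ : K) else z

/-- The coordinate-wise action of an automorphism on a `0`-chain. -/
def actChain {M : IntermediateField ℂ K} (σ : ↥M ≃ₐ[ℂ] ↥M)
    (γ : (K × K) →₀ ℂ) : (K × K) →₀ ℂ :=
  Finsupp.mapDomain (Prod.map (extendAut σ) (extendAut σ)) γ

/-- Evaluation of a polynomial `P(X,Y,t)` at `(u, v, 1/S(x,y))` for `(u,v) = a`. -/
def evalPt (St : Finset (ℤ × ℤ)) (w : ℤ × ℤ → ℂ) (x y : K)
    (P : MvPolynomial (Fin 3) ℂ) (a : K × K) : K :=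
  MvPolynomial.aeval ![a.1, a.2, (stepEval St w x y)⁻¹] P

/-- Evaluation of a polynomial `P(X,Y,t)` at `(x, y, 1/S(x,y))`. -/
def evalXY (St : Finset (ℤ × ℤ)) (w : ℤ × ℤ → ℂ) (x y : K)
    (P : MvPolynomial (Fin 3) ℂ) : K :=
  evalPt St w x y P (x, y)

/-- Evaluation of the fraction `A/B` at `(a.1, a.2, 1/S(x,y))`. -/
def fracEval (St : Finset (ℤ × ℤ)) (w : ℤ × ℤ → ℂ) (x y : K)
    (A B : MvPolynomial (Fin 3) ℂ) (a : K × K) : K :=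
  evalPt St w x y A a / evalPt St w x y B a

/-- Evaluation (orbit sum) of the fraction `A/B` on a `0`-chain. -/
def chainEval (St : Finset (ℤ × ℤ)) (w : ℤ × ℤ → ℂ) (x y : K)
    (A B : MvPolynomial (Fin 3) ℂ) (γ : (K × K) →₀ ℂ) : K :=
  γ.sum fun a c => algebraMap ℂ K c * fracEval St w x y A B a

/-- A `0`-chain cancels decoupled fractions: the orbit sum of every regular fraction
of the form `F(X,t) + G(Y,t)` on it vanishes. -/
def CancelsDecoupled (St : Finset (ℤ × ℤ)) (w : ℤ × ℤ → ℂ) (mx my : ℕ)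
    (x y : K) (α : (K × K) →₀ ℂ) : Prop :=
  ∀ A₁ B₁ A₂ B₂ : MvPolynomial (Fin 3) ℂ,
    A₁ ∈ MvPolynomial.supported ℂ ({0, 2} : Set (Fin 3)) →
    B₁ ∈ MvPolynomial.supported ℂ ({0, 2} : Set (Fin 3)) →
    A₂ ∈ MvPolynomial.supported ℂ ({1, 2} : Set (Fin 3)) →
    B₂ ∈ MvPolynomial.supported ℂ ({1, 2} : Set (Fin 3)) →
    ¬ kernelPoly St w mx my ∣ B₁ → ¬ kernelPoly St w mx my ∣ B₂ →
    (α.sum fun a c =>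
      algebraMap ℂ K c * (fracEval St w x y A₁ B₁ a + fracEval St w x y A₂ B₂ a)) = 0

/-- The field of fractions `ℂ(X,Y,t)`. -/
abbrev FF : Type := FractionRing (MvPolynomial (Fin 3) ℂ)

/-- The inclusion of `ℂ[X,Y,t]` into `ℂ(X,Y,t)`. -/
def toFF (P : MvPolynomial (Fin 3) ℂ) : FF := algebraMap (MvPolynomial (Fin 3) ℂ) FF P

/-- The regular fraction `A/B` admits a Galois decoupling:
`A/B = F + G + K̃·R` with `F ∈ ℂ(X,t)`, `G ∈ ℂ(Y,t)` and `R` regular. -/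
def AdmitsDecoupling (St : Finset (ℤ × ℤ)) (w : ℤ × ℤ → ℂ) (mx my : ℕ)
    (A B : MvPolynomial (Fin 3) ℂ) : Prop :=
  ∃ F₁ F₂ G₁ G₂ R₁ R₂ : MvPolynomial (Fin 3) ℂ,
    F₁ ∈ MvPolynomial.supported ℂ ({0, 2} : Set (Fin 3)) ∧
    F₂ ∈ MvPolynomial.supported ℂ ({0, 2} : Set (Fin 3)) ∧
    G₁ ∈ MvPolynomial.supported ℂ ({1, 2} : Set (Fin 3)) ∧
    G₂ ∈ MvPolynomial.supported ℂ ({1, 2} : Set (Fin 3)) ∧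
    ¬ kernelPoly St w mx my ∣ F₂ ∧ ¬ kernelPoly St w mx my ∣ G₂ ∧
    ¬ kernelPoly St w mx my ∣ R₂ ∧
    toFF A / toFF B =
      toFF F₁ / toFF F₂ + toFF G₁ / toFF G₂ +
        toFF (kernelPoly St w mx my) * (toFF R₁ / toFF R₂)

/-- `(I, J) = (A/B, Cc/D)` is a pair of Galois invariants: `I - J = K̃·R` with `R` regular. -/
def IsInvariantPair (St : Finset (ℤ × ℤ)) (w : ℤ × ℤ → ℂ) (mx my : ℕ)
    (A B Cc D : MvPolynomial (Fin 3) ℂ) : Prop :=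
  ∃ R₁ R₂ : MvPolynomial (Fin 3) ℂ, ¬ kernelPoly St w mx my ∣ R₂ ∧
    toFF A / toFF B - toFF Cc / toFF D =
      toFF (kernelPoly St w mx my) * (toFF R₁ / toFF R₂)

/-- A constant pair of Galois invariants: both members are equivalent to a
common fraction `c ∈ ℂ(t)` modulo `K̃`. -/
def IsConstantPair (St : Finset (ℤ × ℤ)) (w : ℤ × ℤ → ℂ) (mx my : ℕ)
    (A B Cc D : MvPolynomial (Fin 3) ℂ) : Prop :=
  IsInvariantPair St w mx my A B Cc D ∧
  ∃ c₁ c₂ : MvPolynomial (Fin 3) ℂ,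
    c₁ ∈ MvPolynomial.supported ℂ ({2} : Set (Fin 3)) ∧
    c₂ ∈ MvPolynomial.supported ℂ ({2} : Set (Fin 3)) ∧ c₂ ≠ 0 ∧
    IsInvariantPair St w mx my A B c₁ c₂ ∧ IsInvariantPair St w mx my Cc D c₁ c₂

/-- `(γx, γy)` is a pseudo-decoupling of `(x,y)`. -/
def PseudoDecoupling (St : Finset (ℤ × ℤ)) (w : ℤ × ℤ → ℂ) (mx my : ℕ)
    (x y : K) (γx γy : (K × K) →₀ ℂ) : Prop :=
  ∀ A B : MvPolynomial (Fin 3) ℂ, ¬ kernelPoly St w mx my ∣ B →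
    AdmitsDecoupling St w mx my A B →
      fracEval St w x y A B (x, y) =
          chainEval St w x y A B γx + chainEval St w x y A B γy ∧
        chainEval St w x y A B γx ∈ kxF St w x y ∧
        chainEval St w x y A B γy ∈ kyF St w x y

/-- `(gx, gy, a)` is a decoupling of `(x,y)` in the orbit. -/
def IsDecoupling (St : Finset (ℤ × ℤ)) (w : ℤ × ℤ → ℂ) (mx my : ℕ)
    (x y : K) (gx gy a : (K × K) →₀ ℂ) : Prop :=
  Finsupp.single (x, y) (1 : ℂ) = gx + gy + a ∧
  (∀ σ ∈ Gx St w x y, actChain σ gx = gx) ∧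
  (∀ σ ∈ Gy St w x y, actChain σ gy = gy) ∧
  CancelsDecoupled St w mx my x y a

/-- The `x`-part of the boundary of a `1`-chain. -/
def boundaryX (St : Finset (ℤ × ℤ)) (w : ℤ × ℤ → ℂ)
    (c : ((K × K) × (K × K)) →₀ ℂ) : (K × K) →₀ ℂ :=
  c.sum fun e coeff =>
    if XAdj St w e.1 e.2 then
      coeff • (Finsupp.single e.2 (1 : ℂ) - Finsupp.single e.1 (1 : ℂ)) else 0

/-- The `y`-part of the boundary of a `1`-chain. -/
def boundaryY (St : Finset (ℤ × ℤ)) (w : ℤ × ℤ → ℂ)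
    (c : ((K × K) × (K × K)) →₀ ℂ) : (K × K) →₀ ℂ :=
  c.sum fun e coeff =>
    if YAdj St w e.1 e.2 then
      coeff • (Finsupp.single e.2 (1 : ℂ) - Finsupp.single e.1 (1 : ℂ)) else 0

/-- The `0`-chain induced by a bicolored loop. -/
def IsBicoloredChain (St : Finset (ℤ × ℤ)) (w : ℤ × ℤ → ℂ) (x y : K)
    (α : (K × K) →₀ ℂ) : Prop :=
  ∃ (n : ℕ) (b : ℕ → K × K), 0 < n ∧ b (2 * n) = b 0 ∧
    (∀ j < 2 * n, b j ∈ orbit St w x y) ∧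
    (∀ i < n, XAdj St w (b (2 * i)) (b (2 * i + 1)) ∧
      YAdj St w (b (2 * i + 1)) (b (2 * i + 2))) ∧
    α = ∑ j ∈ Finset.range (2 * n), ((-1 : ℂ) ^ (j + 1)) • Finsupp.single (b j) (1 : ℂ)

/-- The `0`-chain `ω = (1/|𝒪|) ∑_{a ∈ 𝒪} a`. -/
def omegaChain (St : Finset (ℤ × ℤ)) (w : ℤ × ℤ → ℂ) (x y : K)
    (h : (orbit St w x y).Finite) : (K × K) →₀ ℂ :=
  ((h.toFinset.card : ℂ))⁻¹ • ∑ a ∈ h.toFinset, Finsupp.single a (1 : ℂ)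

/-- The average `[G]·γ = (1/|G|) ∑_{σ ∈ G} σ·γ` of a `0`-chain under a group. -/
def groupAverage {M : IntermediateField ℂ K} (G : Subgroup (↥M ≃ₐ[ℂ] ↥M))
    (γ : (K × K) →₀ ℂ) : (K × K) →₀ ℂ :=
  ((Nat.card G : ℂ))⁻¹ • ∑ᶠ σ ∈ (G : Set (↥M ≃ₐ[ℂ] ↥M)), actChain σ γ

/-- `ℂ[X,t]` (two variables: `0` and `1`). -/
abbrev MvP2 : Type := MvPolynomial (Fin 2) ℂ

/-- `ℂ(X,t)`, the fraction field of `ℂ[X,t]`. -/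
abbrev CXt : Type := FractionRing MvP2

/-- Constants `ℂ → ℂ(X,t)`. -/
def cconst : ℂ →+* CXt := (algebraMap MvP2 CXt).comp (MvPolynomial.C)

/-- The first generator of `ℂ(X,t)`. -/
def gen0 : CXt := algebraMap MvP2 CXt (MvPolynomial.X 0)

/-- The second generator of `ℂ(X,t)`. -/
def gen1 : CXt := algebraMap MvP2 CXt (MvPolynomial.X 1)

/-- The kernel polynomial viewed as a polynomial in `Y` over `ℂ(X,t)`. -/
def kernelInY (St : Finset (ℤ × ℤ)) (w : ℤ × ℤ → ℂ) (mx my : ℕ) :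
    Polynomial CXt :=
  MvPolynomial.eval₂ ((Polynomial.C : CXt →+* Polynomial CXt).comp cconst)
    ![Polynomial.C gen0, Polynomial.X, Polynomial.C gen1]
    (kernelPoly St w mx my)

/-- The kernel polynomial viewed as a polynomial in `X` over `ℂ(Y,t)`. -/
def kernelInX (St : Finset (ℤ × ℤ)) (w : ℤ × ℤ → ℂ) (mx my : ℕ) :
    Polynomial CXt :=
  MvPolynomial.eval₂ ((Polynomial.C : CXt →+* Polynomial CXt).comp cconst)
    ![Polynomial.X, Polynomial.C gen0, Polynomial.C gen1]
    (kernelPoly St w mx my)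

/-- The kernel polynomial viewed as a polynomial in `X, Y` over `ℂ(t)`. -/
def kernelInXY (St : Finset (ℤ × ℤ)) (w : ℤ × ℤ → ℂ) (mx my : ℕ) :
    MvPolynomial (Fin 2) (RatFunc ℂ) :=
  MvPolynomial.eval₂
    ((MvPolynomial.C : RatFunc ℂ →+* MvPolynomial (Fin 2) (RatFunc ℂ)).comp
      (RatFunc.C : ℂ →+* RatFunc ℂ))
    ![MvPolynomial.X 0, MvPolynomial.X 1, MvPolynomial.C RatFunc.X]
    (kernelPoly St w mx my)

/-- The specialization `K̃(x, Y, 1/S(x,y))` as a polynomial in `Y` over `k(x)`. -/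
def kernelAtX (St : Finset (ℤ × ℤ)) (w : ℤ × ℤ → ℂ) (mx my : ℕ) (x y : K) :
    Polynomial ↥(kxF St w x y) :=
  MvPolynomial.aeval
    ![Polynomial.C (⟨x, x_mem_kxF St w x y⟩ : kxF St w x y), Polynomial.X,
      Polynomial.C (⟨(stepEval St w x y)⁻¹, inv_mem (S_mem_kxF St w x y)⟩ : kxF St w x y)]
    (kernelPoly St w mx my)

/-- The specialization `K̃(X, y, 1/S(x,y))` as a polynomial in `X` over `k(y)`. -/
def kernelAtY (St : Finset (ℤ × ℤ)) (w : ℤ × ℤ → ℂ) (mx my : ℕ) (x y : K) :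
    Polynomial ↥(kyF St w x y) :=
  MvPolynomial.aeval
    ![Polynomial.X, Polynomial.C (⟨y, y_mem_kyF St w x y⟩ : kyF St w x y),
      Polynomial.C (⟨(stepEval St w x y)⁻¹, inv_mem (S_mem_kyF St w x y)⟩ : kyF St w x y)]
    (kernelPoly St w mx my)

/-- Values of regular fractions with numerator and denominator supported on a set
of variables. -/
def regRange (St : Finset (ℤ × ℤ)) (w : ℤ × ℤ → ℂ) (x y : K) (mx my : ℕ)
    (s : Set (Fin 3)) : Set K :=
  {z | ∃ A B : MvPolynomial (Fin 3) ℂ,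
    A ∈ MvPolynomial.supported ℂ s ∧ B ∈ MvPolynomial.supported ℂ s ∧
    ¬ kernelPoly St w mx my ∣ B ∧ z = evalXY St w x y A / evalXY St w x y B}

end QuadrantWalk
namespace QuadrantWalk

/-!
Every point `a` of the orbit is, like `(x, y)`, a transcendence basis of `𝕂` over `ℂ`, with the
same value of `S`. Evaluating at `(a, 1 / S(x, y))` is therefore injective on `ℂ[X, Y]` and sends
`t` to the root of `K̃`, a polynomial of degree one in `t` whose two coefficients `X^mx Y^my S` and
`X^mx Y^my` are coprime in `ℂ[X, Y]`. By Gauss's lemma the multiples of `K̃` are exactly the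
polynomials that vanish at `a`, so a Galois decoupling `H = F + G + K̃ R` of a regular fraction
gives `H_a = F_a + G_a` at every orbit point, and `H_α = 0` as soon as `α` cancels decoupled
fractions.

Since `𝕂` is a Galois extension of `k(x)` and each `τ` in its Galois group permutes the orbit,
restricting `τ` to some `σ ∈ G_x` gives `τ(H_γ) - H_γ = H_(σγ - γ) = 0` for `γ = γx`. Hence `H_γ`
lies in `k(x)`; the argument for `y` is the same.
-/

section TranscendenceBasis

variable {F L ι : Type*} [Field F] [Field L] [Algebra F L]

theorem linearIndependent_zpow {v : L} (hv : Transcendental F v) :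
    LinearIndependent F fun n : ℤ => v ^ n := by
  rw [linearIndependent_iff']
  intro s c hc n hn
  have hv0 : v ≠ 0 := fun h => hv (h ▸ isAlgebraic_zero)
  obtain ⟨N, hN⟩ : ∃ N : ℕ, ∀ m ∈ s, 0 ≤ m + N :=
    ⟨∑ m ∈ s, m.natAbs, fun m hm => by
      have := Finset.single_le_sum (f := Int.natAbs) (fun _ _ => Nat.zero_le _) hm
      omega⟩
  let q : Polynomial F := ∑ m ∈ s, Polynomial.monomial (m + N).toNat (c m)
  have hq_eval : Polynomial.aeval v q = 0 :=
    calc Polynomial.aeval v q = (∑ m ∈ s, c m • v ^ m) * v ^ N := by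
          simp only [q, map_sum, Polynomial.aeval_monomial, Finset.sum_mul, Algebra.smul_def,
            mul_assoc]
          refine Finset.sum_congr rfl fun m hm => ?_
          rw [← zpow_natCast, ← zpow_natCast, Int.toNat_of_nonneg (hN m hm), zpow_add₀ hv0]
      _ = 0 := by rw [hc, zero_mul]
  have hq : q = 0 := by_contra fun h => hv ⟨q, h, hq_eval⟩
  have hcoeff : q.coeff (n + N).toNat = c n := by
    rw [Polynomial.finsetSum_coeff, Finset.sum_eq_single_of_mem n hn,
      Polynomial.coeff_monomial_same]
    intro m hm hmn
    have h₁ := hN m hm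
    have h₂ := hN n hn
    exact Polynomial.coeff_monomial_of_ne _ (by omega)
  rw [← hcoeff, hq, Polynomial.coeff_zero]

theorem isAlgebraic_of_sum_zpow_mem {E : IntermediateField F L} {u v : L}
    (hu : Transcendental F u) (huE : u ∈ E) {T : Finset (ℤ × ℤ)} {c : ℤ × ℤ → F}
    (hT : ∃ p ∈ T, p.2 ≠ 0 ∧ c p ≠ 0)
    (hmem : ∑ p ∈ T, algebraMap F L (c p) * u ^ p.1 * v ^ p.2 ∈ E) : IsAlgebraic E v := by
  by_contra hv
  let u' : E := ⟨u, huE⟩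
  have hu' : Transcendental F u' := (transcendental_algebraMap_iff Subtype.val_injective).1 hu
  have hvE : LinearIndependent E fun n : ℤ => v ^ n := linearIndependent_zpow hv
  have huv : LinearIndependent F fun p : ℤ × ℤ => u' ^ p.1 • v ^ p.2 :=
    linearIndependent_smul (linearIndependent_zpow hu') hvE
  let t : ℤ × ℤ → L := fun p => algebraMap F L (c p) * u ^ p.1 * v ^ p.2
  have ht : ∀ p, t p = algebraMap F E (c p) • u' ^ p.1 • v ^ p.2 := fun p => mul_assoc _ _ _
  have hspan : ∑ p ∈ T with p.2 ≠ 0, t p ∈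
      Submodule.span E ((fun n : ℤ => v ^ n) '' {0}ᶜ) := sum_mem fun p hp => ht p ▸
    Submodule.smul_mem _ _ (Submodule.smul_mem _ _
      (Submodule.subset_span ⟨p.2, (Finset.mem_filter.1 hp).2, rfl⟩))
  have hmemE : ∑ p ∈ T with p.2 ≠ 0, t p ∈ E := by
    rw [← Finset.sum_filter_not_add_sum_filter T (fun p => p.2 ≠ 0)] at hmem
    refine (add_mem_cancel_left (sum_mem fun p hp => ?_)).1 hmem
    rw [not_not.1 (Finset.mem_filter.1 hp).2, zpow_zero, mul_one]
    exact mul_mem (E.algebraMap_mem _) (zpow_mem huE _)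
  have hspan₀ : ∑ p ∈ T with p.2 ≠ 0, t p ∈ Submodule.span E ((fun n : ℤ => v ^ n) '' {0}) := by
    rw [Set.image_singleton, zpow_zero]
    exact Submodule.mem_span_singleton.2 ⟨⟨_, hmemE⟩, mul_one _⟩
  have hzero : ∑ p ∈ T with p.2 ≠ 0, t p = 0 :=
    Submodule.disjoint_def.1 (hvE.disjoint_span_image disjoint_compl_left) _ hspan hspan₀
  obtain ⟨p, hp, hp2, hcp⟩ := hT
  exact hcp (linearIndependent_iff'.1 huv _ c
    (by simpa only [ht, algebraMap_smul] using hzero) p (Finset.mem_filter.2 ⟨hp, hp2⟩))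

theorem isAlgebraic_of_isTranscendenceBasis {x : ι → L} (hx : IsTranscendenceBasis F x)
    {E : IntermediateField F L} (hxE : ∀ i, IsAlgebraic E (x i)) : Algebra.IsAlgebraic E L := by
  have hle : Algebra.adjoin F (Set.range x) ≤
      ((algebraicClosure E L).restrictScalars F).toSubalgebra :=
    Algebra.adjoin_le <| Set.range_subset_iff.2 fun i => mem_algebraicClosure_iff.2 (hxE i)
  have : Algebra.IsAlgebraic (algebraicClosure E L) L :=
    ⟨fun z => (hx.isAlgebraic.isAlgebraic z).tower_top_of_subalgebra_le hle⟩
  exact Algebra.IsAlgebraic.trans E (algebraicClosure E L) L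

theorem isTranscendenceBasis_of_isAlgebraic_adjoin [Finite ι] {x y : ι → L}
    (hx : AlgebraicIndependent F x) (hy : Algebra.IsAlgebraic (adjoin F (Set.range y)) L) :
    IsTranscendenceBasis F y :=
  have := isAlgebraic_adjoin_iff_top.1 hy
  Algebra.IsAlgebraic.isTranscendenceBasis_of_lift_le_trdeg_of_finite F y
    hx.lift_cardinalMk_le_trdeg

end TranscendenceBasis

section Galois

variable {F L : Type*} [Field F] [Field L] [Algebra F L]

theorem fixedField_fixingSubgroup_of_isGalois (E : IntermediateField F L) [IsGalois E L] :
    fixedField E.fixingSubgroup = E := by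
  refine le_antisymm (fun z hz => ?_) ((le_iff_le _ E).2 le_rfl)
  have hbot : z ∈ (⊥ : IntermediateField E L) := (InfiniteGalois.mem_bot_iff_fixed z).2 fun σ =>
    hz (E.fixingSubgroupEquiv.symm σ)
  obtain ⟨e, rfl⟩ := mem_bot.1 hbot
  exact e.2

theorem exists_restrict_of_map_eq {M : IntermediateField F L} {τ : L ≃ₐ[F] L}
    (hM : M.map (τ : L →ₐ[F] L) = M) : ∃ σ : M ≃ₐ[F] M, ∀ z : M, (σ z : L) = τ z :=
  ⟨(intermediateFieldMap τ M).trans (equivOfEq hM), fun _ => rfl⟩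

end Galois

section LinearPolynomial

open Polynomial

variable {R L : Type*} [CommRing R]

theorem isPrimitive_C_sub_C_mul_X {a b : R} (hab : IsRelPrime a b) :
    (C b - C a * X).IsPrimitive := fun r hr => by
  rw [C_dvd_iff_dvd_coeff] at hr
  exact hab (by simpa using hr 1) (by simpa using hr 0)

theorem C_sub_C_mul_X_dvd_iff [Field L] {a b z : L} (ha : a ≠ 0) (hz : a * z = b) {q : L[X]} :
    C b - C a * X ∣ q ↔ q.IsRoot z := by
  have h : C b - C a * X = C (-a) * (X - C z) := by
    rw [← hz, C_mul, C_neg]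
    ring
  rw [h, (isUnit_C.2 (neg_ne_zero.2 ha).isUnit).mul_left_dvd, dvd_iff_isRoot]

theorem C_sub_C_mul_X_dvd_iff_eval₂_eq_zero [IsDomain R] [IsGCDMonoid R] [Field L] {φ : R →+* L}
    (hφ : Function.Injective φ) {a b : R} (hab : IsRelPrime a b) {z : L} (hz : φ a * z = φ b)
    {q : R[X]} : C b - C a * X ∣ q ↔ q.eval₂ φ z = 0 := by
  have ha : a ≠ 0 := by
    rintro rfl
    have hb : b = 0 := hφ (by rw [← hz, map_zero, zero_mul])
    exact not_isUnit_zero (hab (dvd_refl 0) hb.symm.dvd)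
  let ι : R →+* FractionRing R := algebraMap R (FractionRing R)
  have hιa : ι a ≠ 0 := (map_ne_zero_iff ι (IsFractionRing.injective R _)).2 ha
  let ψ : FractionRing R →+* L := IsFractionRing.lift hφ
  have hψι : ψ.comp ι = φ := RingHom.ext (IsFractionRing.lift_algebraMap hφ)
  have hψ : ∀ r, ψ (ι r) = φ r := RingHom.congr_fun hψι
  have hψz : ψ (ι b / ι a) = z := by
    rw [map_div₀, hψ, hψ, ← hz, mul_div_cancel_left₀ _ (hψ a ▸ (map_ne_zero ψ).2 hιa)]
  calc C b - C a * X ∣ q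
      ↔ C (ι b) - C (ι a) * X ∣ q.map ι := by
        rw [(isPrimitive_C_sub_C_mul_X hab).dvd_iff_fraction_map_dvd_fraction_map (FractionRing R)]
        simp only [Polynomial.map_sub, Polynomial.map_mul, map_C, map_X, ι]
    _ ↔ (q.map ι).IsRoot (ι b / ι a) := C_sub_C_mul_X_dvd_iff hιa (mul_div_cancel₀ _ hιa)
    _ ↔ q.eval₂ φ z = 0 := by
        rw [IsRoot, ← map_eq_zero ψ, eval_map, hom_eval₂, hψι, hψz]

end LinearPolynomial

section FractionRing

theorem map_div_map_eq_of_div_eq_add_add {R F L : Type*} [CommRing R] [Field F] [Algebra R F]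
    [IsFractionRing R F] [Field L] (φ : R →+* L) {a b f₁ f₂ g₁ g₂ r₁ r₂ κ : R}
    (hb : φ b ≠ 0) (hf : φ f₂ ≠ 0) (hg : φ g₂ ≠ 0) (hr : φ r₂ ≠ 0) (hκ : φ κ = 0)
    (h : algebraMap R F a / algebraMap R F b =
      algebraMap R F f₁ / algebraMap R F f₂ + algebraMap R F g₁ / algebraMap R F g₂ +
        algebraMap R F κ * (algebraMap R F r₁ / algebraMap R F r₂)) :
    φ a / φ b = φ f₁ / φ f₂ + φ g₁ / φ g₂ := by
  have hne : ∀ {s : R}, φ s ≠ 0 → algebraMap R F s ≠ 0 := fun hs =>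
    (map_ne_zero_iff _ (IsFractionRing.injective R _)).2 (ne_zero_of_map hs)
  have hclear : a * (f₂ * g₂ * r₂) =
      b * (f₁ * g₂ * r₂ + g₁ * f₂ * r₂ + κ * r₁ * f₂ * g₂) := by
    apply IsFractionRing.injective R F
    have hB := hne hb
    have hF := hne hf
    have hG := hne hg
    have hR := hne hr
    field_simp at h
    simp only [map_mul, map_add]
    linear_combination h
  have hval := congrArg φ hclear
  simp only [map_mul, map_add, hκ] at hval
  rw [div_add_div _ _ hf hg, div_eq_div_iff hb (mul_ne_zero hf hg)]
  exact mul_right_cancel₀ hr (by linear_combination hval)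

end FractionRing

section MvPoly

open MvPolynomial

variable {R : Type*} [CommSemiring R] {n : ℕ}

/-- The isomorphism `R[X₀, …, Xₙ] ≃ R[X₀, …, Xₙ₋₁][Xₙ]`; Mathlib's `MvPolynomial.finSuccEquiv`
singles out the first variable instead. -/
def finSuccEquivLastVar (R : Type*) [CommSemiring R] (n : ℕ) :
    MvPolynomial (Fin (n + 1)) R ≃ₐ[R] Polynomial (MvPolynomial (Fin n) R) :=
  (renameEquiv R finSuccEquivLast).trans (optionEquivLeft R (Fin n))

@[simp]
theorem finSuccEquivLastVar_X_castSucc (i : Fin n) :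
    finSuccEquivLastVar R n (X i.castSucc) = Polynomial.C (X i) := by
  simp [finSuccEquivLastVar, optionEquivLeft_X_some]

@[simp]
theorem finSuccEquivLastVar_X_last : finSuccEquivLastVar R n (X (Fin.last n)) = Polynomial.X := by
  simp [finSuccEquivLastVar, optionEquivLeft_X_none]

@[simp]
theorem finSuccEquivLastVar_C (c : R) :
    finSuccEquivLastVar R n (C c) = Polynomial.C (C c) :=
  (finSuccEquivLastVar R n).commutes c

theorem eval₂_finSuccEquivLastVar {A : Type*} [CommSemiring A] [Algebra R A] (z : Fin (n + 1) → A)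
    (P : MvPolynomial (Fin (n + 1)) R) :
    (finSuccEquivLastVar R n P).eval₂ (aeval (R := R) (z ∘ Fin.castSucc)) (z (Fin.last n)) =
      aeval z P := by
  induction P using MvPolynomial.induction_on with
  | C c => simp
  | add P Q hP hQ => simp [hP, hQ, Polynomial.eval₂_add]
  | mul_X P i hP => induction i using Fin.lastCases <;> simp [hP, Polynomial.eval₂_mul]

theorem not_X_dvd_of_coeff_ne_zero {σ : Type*} {P : MvPolynomial σ R} {i : σ}
    {m : σ →₀ ℕ} (hm : coeff m P ≠ 0) (hmi : m i = 0) : ¬ X i ∣ P := by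
  rintro ⟨q, rfl⟩
  rw [coeff_X_mul', if_neg (Finsupp.notMem_support_iff.2 hmi)] at hm
  exact hm rfl

end MvPoly

section Walk

variable {K : Type} [Field K] [Algebra ℂ K] {St : Finset (ℤ × ℤ)} {w : ℤ × ℤ → ℂ}

section Orbit

variable {x y u v : K} {a : K × K} {E : IntermediateField ℂ K}

theorem stepEval_mem (hu : u ∈ E) (hv : v ∈ E) : stepEval St w u v ∈ E :=
  sum_mem fun _ _ => mul_mem (mul_mem (E.algebraMap_mem _) (zpow_mem hu _)) (zpow_mem hv _)

theorem stepEval_swap (St : Finset (ℤ × ℤ)) (w : ℤ × ℤ → ℂ) (u v : K) :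
    stepEval (St.map (Equiv.prodComm ℤ ℤ).toEmbedding) (w ∘ Prod.swap) v u = stepEval St w u v := by
  simp [stepEval, mul_right_comm]

theorem isAlgebraic_snd_of_stepEval_mem (hw : ∀ p ∈ St, w p ≠ 0)
    (hn : ∃ p ∈ St, ∃ q ∈ St, p.2 ≠ q.2) (hu : Transcendental ℂ u) (huE : u ∈ E)
    (hS : stepEval St w u v ∈ E) : IsAlgebraic E v := by
  obtain ⟨p, hp, q, hq, hpq⟩ := hn
  refine isAlgebraic_of_sum_zpow_mem hu huE ?_ hS
  by_cases h : p.2 = 0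
  · exact ⟨q, hq, fun h' => hpq (h.trans h'.symm), hw q hq⟩
  · exact ⟨p, hp, h, hw p hp⟩

theorem isAlgebraic_fst_of_stepEval_mem (hw : ∀ p ∈ St, w p ≠ 0)
    (hn : ∃ p ∈ St, ∃ q ∈ St, p.1 ≠ q.1) (hv : Transcendental ℂ v) (hvE : v ∈ E)
    (hS : stepEval St w u v ∈ E) : IsAlgebraic E u := by
  rw [← stepEval_swap] at hS
  obtain ⟨p, hp, q, hq, hpq⟩ := hn
  exact isAlgebraic_snd_of_stepEval_mem (Finset.forall_mem_map.2 hw)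
    ⟨_, Finset.mem_map_of_mem _ hp, _, Finset.mem_map_of_mem _ hq, hpq⟩ hv hvE hS

theorem isAlgebraic_of_stepEval_mem (hw : ∀ p ∈ St, w p ≠ 0) (hn : NotUnivariate St)
    (huv : IsTranscendenceBasis ℂ ![u, v]) (hE : u ∈ E ∨ v ∈ E) (hS : stepEval St w u v ∈ E) :
    Algebra.IsAlgebraic E K := by
  have hmem : ∀ z ∈ E, IsAlgebraic E z := fun z hz => isAlgebraic_algebraMap (⟨z, hz⟩ : E)
  refine isAlgebraic_of_isTranscendenceBasis huv (Fin.forall_fin_two.2 ?_)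
  rcases hE with hu | hv
  · exact ⟨hmem u hu, isAlgebraic_snd_of_stepEval_mem hw hn.2 (huv.1.transcendental 0) hu hS⟩
  · exact ⟨isAlgebraic_fst_of_stepEval_mem hw hn.1 (huv.1.transcendental 1) hv hS, hmem v hv⟩

theorem Setting.isTranscendenceBasis (h : Setting St w x y) : IsTranscendenceBasis ℂ ![x, y] := by
  refine isTranscendenceBasis_of_isAlgebraic_adjoin h.indep ?_
  rw [Matrix.range_cons_cons_empty]
  exact h.algebraic

theorem stepEval_eq_of_mem_orbit (ha : a ∈ orbit St w x y) :
    stepEval St w a.1 a.2 = stepEval St w x y := by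
  induction ha with
  | refl => rfl
  | tail _ hbc ih => exact (hbc.elim And.right And.right).symm.trans ih

theorem Setting.isTranscendenceBasis_of_mem_orbit (h : Setting St w x y)
    (ha : a ∈ orbit St w x y) : IsTranscendenceBasis ℂ ![a.1, a.2] := by
  induction ha with
  | refl => exact h.isTranscendenceBasis
  | @tail b c _ hbc ih =>
    refine isTranscendenceBasis_of_isAlgebraic_adjoin h.indep ?_
    rw [Matrix.range_cons_cons_empty]
    have h₁ : c.1 ∈ adjoin ℂ {c.1, c.2} := subset_adjoin ℂ _ (Set.mem_insert _ _)
    have h₂ : c.2 ∈ adjoin ℂ {c.1, c.2} := subset_adjoin ℂ _ (Set.mem_insert_of_mem _ rfl)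
    refine isAlgebraic_of_stepEval_mem h.weight_ne h.notUniv ih ?_ ?_
    · exact hbc.imp (fun ⟨e, _⟩ => e.symm ▸ h₁) (fun ⟨e, _⟩ => e.symm ▸ h₂)
    · rw [hbc.elim And.right And.right]
      exact stepEval_mem h₁ h₂

end Orbit

section Kernel

open MvPolynomial

variable {x y u v : K} {a : K × K} {mx my : ℕ}

/-- The numerator `X^mx * Y^my * S(X,Y)` of the step polynomial, as an element of `ℂ[X,Y]`. -/
def stepNumer (St : Finset (ℤ × ℤ)) (w : ℤ × ℤ → ℂ) (mx my : ℕ) : MvPolynomial (Fin 2) ℂ :=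
  ∑ p ∈ St, C (w p) * X 0 ^ (p.1 + (mx : ℤ)).toNat * X 1 ^ (p.2 + (my : ℤ)).toNat

theorem coeff_stepNumer (hb : ExponentBounds St mx my) {p : ℤ × ℤ} (hp : p ∈ St) :
    coeff (Finsupp.single 0 (p.1 + (mx : ℤ)).toNat + Finsupp.single 1 (p.2 + (my : ℤ)).toNat)
      (stepNumer St w mx my) = w p := by
  simp only [stepNumer, X_pow_eq_monomial, C_mul_monomial, monomial_mul, mul_one, coeff_sum,
    coeff_monomial]
  rw [Finset.sum_eq_single_of_mem p hp fun q hq hqp => if_neg fun h => hqp ?_, if_pos rfl]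
  have h₀ : (q.1 + (mx : ℤ)).toNat = (p.1 + (mx : ℤ)).toNat := by
    simpa using DFunLike.congr_fun h 0
  have h₁ : (q.2 + (my : ℤ)).toNat = (p.2 + (my : ℤ)).toNat := by
    simpa using DFunLike.congr_fun h 1
  have := hb.lowerX p hp
  have := hb.lowerX q hq
  have := hb.lowerY p hp
  have := hb.lowerY q hq
  exact Prod.ext (by lia) (by lia)

theorem not_X_dvd_stepNumer (hw : ∀ p ∈ St, w p ≠ 0) (hb : ExponentBounds St mx my)
    (i : Fin 2) : ¬ X i ∣ stepNumer St w mx my := by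
  have hcoeff : ∀ p ∈ St, coeff (Finsupp.single 0 (p.1 + (mx : ℤ)).toNat +
      Finsupp.single 1 (p.2 + (my : ℤ)).toNat) (stepNumer St w mx my) ≠ 0 := fun p hp =>
    coeff_stepNumer hb hp ▸ hw p hp
  obtain ⟨p, hp, hpx⟩ := hb.attainX
  obtain ⟨q, hq, hqy⟩ := hb.attainY
  fin_cases i
  · exact not_X_dvd_of_coeff_ne_zero (hcoeff p hp) (by simp [hpx])
  · exact not_X_dvd_of_coeff_ne_zero (hcoeff q hq) (by simp [hqy])

theorem isRelPrime_stepNumer (hw : ∀ p ∈ St, w p ≠ 0) (hb : ExponentBounds St mx my) :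
    IsRelPrime (stepNumer St w mx my) (X 0 ^ mx * X 1 ^ my) := by
  have h : ∀ i, IsRelPrime (stepNumer St w mx my) (X i) := fun i =>
    ((X_prime (i := i)).irreducible.isRelPrime_iff_not_dvd.2 (not_X_dvd_stepNumer hw hb i)).symm
  exact (h 0).pow_right.mul_right (h 1).pow_right

theorem finSuccEquivLastVar_kernelPoly (St : Finset (ℤ × ℤ)) (w : ℤ × ℤ → ℂ) (mx my : ℕ) :
    finSuccEquivLastVar ℂ 2 (kernelPoly St w mx my) =
      Polynomial.C (X 0 ^ mx * X 1 ^ my) - Polynomial.C (stepNumer St w mx my) * Polynomial.X := by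
  have h₀ : finSuccEquivLastVar ℂ 2 (X 0) = Polynomial.C (X 0) :=
    finSuccEquivLastVar_X_castSucc 0
  have h₁ : finSuccEquivLastVar ℂ 2 (X 1) = Polynomial.C (X 1) :=
    finSuccEquivLastVar_X_castSucc 1
  have h₂ : finSuccEquivLastVar ℂ 2 (X 2) = Polynomial.X := finSuccEquivLastVar_X_last
  simp only [kernelPoly, stepNumer, map_sub, map_mul, map_pow, map_sum, h₀, h₁, h₂,
    finSuccEquivLastVar_C, mul_comm Polynomial.X]

theorem aeval_stepNumer (hb : ExponentBounds St mx my) (hu : u ≠ 0) (hv : v ≠ 0) :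
    aeval ![u, v] (stepNumer St w mx my) = u ^ mx * v ^ my * stepEval St w u v := by
  simp only [stepNumer, stepEval, map_sum, map_mul, map_pow, aeval_C, aeval_X,
    Matrix.cons_val_zero, Matrix.cons_val_one, Finset.mul_sum]
  refine Finset.sum_congr rfl fun p hp => ?_
  have hx := hb.lowerX p hp
  have hy := hb.lowerY p hp
  rw [← zpow_natCast u (Int.toNat _), ← zpow_natCast v (Int.toNat _),
    Int.toNat_of_nonneg (by lia), Int.toNat_of_nonneg (by lia), zpow_add₀ hu, zpow_add₀ hv,
    zpow_natCast, zpow_natCast]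
  ring

theorem stepEval_ne_zero (hw : ∀ p ∈ St, w p ≠ 0) (hb : ExponentBounds St mx my)
    (huv : AlgebraicIndependent ℂ ![u, v]) : stepEval St w u v ≠ 0 := by
  have hu : u ≠ 0 := huv.ne_zero 0
  have hv : v ≠ 0 := huv.ne_zero 1
  have hN : aeval ![u, v] (stepNumer St w mx my) ≠ 0 :=
    (map_ne_zero_iff _ huv).2 fun h => not_X_dvd_stepNumer hw hb 0 (h ▸ dvd_zero _)
  rw [aeval_stepNumer hb hu hv] at hN
  exact right_ne_zero_of_mul hN

theorem kernelPoly_dvd_iff_evalPt_eq_zero (h : Setting St w x y) (hb : ExponentBounds St mx my)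
    (ha : a ∈ orbit St w x y) {P : MvPolynomial (Fin 3) ℂ} :
    kernelPoly St w mx my ∣ P ↔ evalPt St w x y P a = 0 := by
  have hind : AlgebraicIndependent ℂ ![a.1, a.2] := (h.isTranscendenceBasis_of_mem_orbit ha).1
  have h₁ : a.1 ≠ 0 := hind.ne_zero 0
  have h₂ : a.2 ≠ 0 := hind.ne_zero 1
  have hS : stepEval St w x y ≠ 0 := stepEval_ne_zero h.weight_ne hb h.indep
  have hroot : aeval ![a.1, a.2] (stepNumer St w mx my) * (stepEval St w x y)⁻¹ =
      aeval ![a.1, a.2] (X 0 ^ mx * X 1 ^ my : MvPolynomial (Fin 2) ℂ) := by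
    rw [aeval_stepNumer hb h₁ h₂, stepEval_eq_of_mem_orbit ha, mul_inv_cancel_right₀ hS]
    simp
  let z : Fin 3 → K := ![a.1, a.2, (stepEval St w x y)⁻¹]
  have hz : z ∘ Fin.castSucc = ![a.1, a.2] := by
    funext i
    fin_cases i <;> rfl
  have hinj : Function.Injective (aeval (R := ℂ) ![a.1, a.2] : MvPolynomial (Fin 2) ℂ →+* K) :=
    hind
  rw [← map_dvd_iff (finSuccEquivLastVar ℂ 2), finSuccEquivLastVar_kernelPoly,
    C_sub_C_mul_X_dvd_iff_eval₂_eq_zero hinj (isRelPrime_stepNumer h.weight_ne hb) hroot, evalPt,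
    ← eval₂_finSuccEquivLastVar z, hz]
  rfl

end Kernel

section Decoupling

open MvPolynomial

variable {x y : K} {mx my : ℕ} {A B : MvPolynomial (Fin 3) ℂ} {α : (K × K) →₀ ℂ}

theorem chainEval_eq_linearCombination (St : Finset (ℤ × ℤ)) (w : ℤ × ℤ → ℂ) (x y : K)
    (A B : MvPolynomial (Fin 3) ℂ) (γ : (K × K) →₀ ℂ) :
    chainEval St w x y A B γ = Finsupp.linearCombination ℂ (fracEval St w x y A B) γ := by
  simp only [chainEval, Finsupp.linearCombination_apply, Algebra.smul_def]

theorem chainEval_eq_zero_of_cancelsDecoupled (h : Setting St w x y) (hb : ExponentBounds St mx my)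
    (hα : ↑α.support ⊆ orbit St w x y) (hcancel : CancelsDecoupled St w mx my x y α)
    (hB : ¬ kernelPoly St w mx my ∣ B) (hAB : AdmitsDecoupling St w mx my A B) :
    chainEval St w x y A B α = 0 := by
  obtain ⟨F₁, F₂, G₁, G₂, R₁, R₂, hF₁, hF₂, hG₁, hG₂, hF, hG, hR, heq⟩ := hAB
  have hfrac : ∀ a ∈ orbit St w x y, fracEval St w x y A B a =
      fracEval St w x y F₁ F₂ a + fracEval St w x y G₁ G₂ a := fun a ha =>
    have hdvd {P} := kernelPoly_dvd_iff_evalPt_eq_zero h hb ha (P := P)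
    map_div_map_eq_of_div_eq_add_add
      (aeval ![a.1, a.2, (stepEval St w x y)⁻¹] : MvPolynomial (Fin 3) ℂ →ₐ[ℂ] K).toRingHom
      (hdvd.not.1 hB) (hdvd.not.1 hF) (hdvd.not.1 hG) (hdvd.not.1 hR) (hdvd.1 dvd_rfl) heq
  rw [← hcancel F₁ F₂ G₁ G₂ hF₁ hF₂ hG₁ hG₂ hF hG]
  exact Finsupp.sum_congr fun a ha => by rw [hfrac a (hα ha)]

end Decoupling

section GaloisAction

variable {x y : K} {a : K × K} {mx my : ℕ} {A B : MvPolynomial (Fin 3) ℂ} {γ : (K × K) →₀ ℂ}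
  {E : IntermediateField ℂ K} {τ : K ≃ₐ[ℂ] K}

theorem map_stepEval (τ : K →ₐ[ℂ] K) (u v : K) :
    τ (stepEval St w u v) = stepEval St w (τ u) (τ v) := by
  simp only [stepEval, map_sum, map_mul, map_zpow₀, AlgHom.commutes]

theorem chainEval_mapDomain {τ : K →ₐ[ℂ] K} (hτ : τ (stepEval St w x y) = stepEval St w x y)
    (A B : MvPolynomial (Fin 3) ℂ) (γ : (K × K) →₀ ℂ) :
    chainEval St w x y A B (γ.mapDomain (Prod.map τ τ)) = τ (chainEval St w x y A B γ) := by
  have heval : ∀ P a, evalPt St w x y P (Prod.map τ τ a) = τ (evalPt St w x y P a) := by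
    intro P a
    rw [evalPt, evalPt, MvPolynomial.comp_aeval_apply]
    congr 2
    funext i
    fin_cases i <;> simp [hτ]
  have hfrac : fracEval St w x y A B ∘ Prod.map τ τ = τ ∘ fracEval St w x y A B := by
    funext a
    simp only [Function.comp_apply, fracEval, heval, map_div₀]
  rw [chainEval_eq_linearCombination, chainEval_eq_linearCombination,
    Finsupp.linearCombination_mapDomain, hfrac]
  exact (Finsupp.apply_linearCombination ℂ τ.toLinearMap _ _).symm

theorem map_mem_orbit (hτ : τ ∈ E.fixingSubgroup) (hE : x ∈ E ∨ y ∈ E)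
    (hS : stepEval St w x y ∈ E) (ha : a ∈ orbit St w x y) :
    Prod.map τ τ a ∈ orbit St w x y := by
  have hfix := (mem_fixingSubgroup_iff E τ).1 hτ
  have hmap : ∀ u v, τ (stepEval St w u v) = stepEval St w (τ u) (τ v) :=
    map_stepEval (τ : K →ₐ[ℂ] K)
  induction ha with
  | refl =>
    have hS' : stepEval St w x y = stepEval St w (τ x) (τ y) := (hfix _ hS).symm.trans (hmap x y)
    exact .single (hE.imp (fun hx => ⟨(hfix x hx).symm, hS'⟩) fun hy => ⟨(hfix y hy).symm, hS'⟩)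
  | @tail b c _ hbc ih =>
    have hS' (h : stepEval St w b.1 b.2 = stepEval St w c.1 c.2) :
        stepEval St w (τ b.1) (τ b.2) = stepEval St w (τ c.1) (τ c.2) := by
      rw [← hmap, h, hmap]
    exact ih.tail (hbc.imp (And.imp (congrArg τ) hS') (And.imp (congrArg τ) hS'))

theorem map_orbitF (hτ : τ ∈ E.fixingSubgroup) (hE : x ∈ E ∨ y ∈ E)
    (hS : stepEval St w x y ∈ E) :
    (orbitF St w x y).map (τ : K →ₐ[ℂ] K) = orbitF St w x y := by
  have hle : ∀ τ ∈ E.fixingSubgroup, (orbitF St w x y).map (τ : K →ₐ[ℂ] K) ≤ orbitF St w x y := by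
    intro τ hτ
    rw [orbitF, adjoin_map, adjoin_le_iff]
    rintro _ ⟨z, rfl | ⟨a, ha, hz⟩, rfl⟩
    · exact subset_adjoin ℂ _ (Or.inl ((mem_fixingSubgroup_iff E τ).1 hτ _ hS))
    · exact subset_adjoin ℂ _
        (Or.inr ⟨_, map_mem_orbit hτ hE hS ha, hz.imp (congrArg τ) (congrArg τ)⟩)
  refine (hle τ hτ).antisymm fun z hz => ?_
  exact ⟨τ⁻¹ z, hle τ⁻¹ (inv_mem hτ) ⟨z, hz, rfl⟩, τ.apply_symm_apply z⟩

theorem exists_actChain_eq_mapDomain (hτ : τ ∈ E.fixingSubgroup) (hE : x ∈ E ∨ y ∈ E)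
    (hS : stepEval St w x y ∈ E) (hγ : ↑γ.support ⊆ orbit St w x y) :
    ∃ σ ∈ fixingAuts E (orbitF St w x y), actChain σ γ = γ.mapDomain (Prod.map τ τ) := by
  obtain ⟨σ, hσ⟩ := exists_restrict_of_map_eq (map_orbitF hτ hE hS)
  have hext : ∀ z ∈ orbitF St w x y, extendAut σ z = τ z := fun z hz =>
    (dif_pos hz).trans (hσ ⟨z, hz⟩)
  refine ⟨σ, fun z hzE hz => Subtype.ext ((hσ ⟨z, hz⟩).trans
    ((mem_fixingSubgroup_iff E τ).1 hτ z hzE)), Finsupp.mapDomain_congr fun a ha => ?_⟩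
  exact Prod.ext (hext _ (subset_adjoin ℂ _ (Or.inr ⟨a, hγ ha, Or.inl rfl⟩)))
    (hext _ (subset_adjoin ℂ _ (Or.inr ⟨a, hγ ha, Or.inr rfl⟩)))

theorem support_mapDomain_sub_subset_orbit (hτ : τ ∈ E.fixingSubgroup) (hE : x ∈ E ∨ y ∈ E)
    (hS : stepEval St w x y ∈ E) (hγ : ↑γ.support ⊆ orbit St w x y) :
    ↑(γ.mapDomain (Prod.map τ τ) - γ).support ⊆ orbit St w x y := by
  intro b hb
  rcases Finset.mem_union.1 (Finsupp.support_sub hb) with hb | hb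
  · obtain ⟨a, ha, rfl⟩ := Finset.mem_image.1 (Finsupp.mapDomain_support hb)
    exact map_mem_orbit hτ hE hS (hγ ha)
  · exact hγ hb

theorem chainEval_mem (h : Setting St w x y) (hb : ExponentBounds St mx my)
    (hE : x ∈ E ∨ y ∈ E) (hS : stepEval St w x y ∈ E) (hγ : ↑γ.support ⊆ orbit St w x y)
    (hcancel : ∀ σ ∈ fixingAuts E (orbitF St w x y),
      CancelsDecoupled St w mx my x y (actChain σ γ - γ))
    (hB : ¬ kernelPoly St w mx my ∣ B) (hAB : AdmitsDecoupling St w mx my A B) :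
    chainEval St w x y A B γ ∈ E := by
  have := h.algClosed
  have := isAlgebraic_of_stepEval_mem h.weight_ne h.notUniv h.isTranscendenceBasis hE hS
  have : IsAlgClosure E K := ⟨inferInstance, inferInstance⟩
  have : Normal E K := IsAlgClosure.normal E K
  have : IsGalois E K := .mk
  rw [← fixedField_fixingSubgroup_of_isGalois E]
  rintro ⟨τ, hτ⟩
  obtain ⟨σ, hσ, hact⟩ := exists_actChain_eq_mapDomain hτ hE hS hγ
  have hzero : chainEval St w x y A B (γ.mapDomain (Prod.map τ τ) - γ) = 0 :=
    chainEval_eq_zero_of_cancelsDecoupled h hb (support_mapDomain_sub_subset_orbit hτ hE hS hγ)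
      (hact ▸ hcancel σ hσ) hB hAB
  rw [chainEval_eq_linearCombination, map_sub, sub_eq_zero, ← chainEval_eq_linearCombination,
    ← chainEval_eq_linearCombination] at hzero
  have hτS : τ (stepEval St w x y) = stepEval St w x y := (mem_fixingSubgroup_iff E τ).1 hτ _ hS
  exact (chainEval_mapDomain (τ := (τ : K →ₐ[ℂ] K)) hτS A B γ).symm.trans hzero

end GaloisAction

end Walk

/-- if `(x,y) = γx + γy` and `σ·γx - γx` (resp. `σ·γy - γy`) cancels
decoupled fractions for every `σ ∈ G_x` (resp. `σ ∈ G_y`), then `(γx, γy)` is a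
pseudo-decoupling of `(x,y)`. -/
theorem stmt18 {K : Type} [Field K] [Algebra ℂ K]
    (St : Finset (ℤ × ℤ)) (w : ℤ × ℤ → ℂ) (x y : K) (mx my : ℕ)
    (hset : Setting St w x y) (hb : ExponentBounds St mx my)
    (gx gy : (K × K) →₀ ℂ)
    (hgx : ↑gx.support ⊆ orbit St w x y) (hgy : ↑gy.support ⊆ orbit St w x y)
    (h1 : Finsupp.single (x, y) (1 : ℂ) = gx + gy)
    (h2 : ∀ σ ∈ Gx St w x y,
      CancelsDecoupled St w mx my x y (actChain σ gx - gx))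
    (h3 : ∀ σ ∈ Gy St w x y,
      CancelsDecoupled St w mx my x y (actChain σ gy - gy)) :
    PseudoDecoupling St w mx my x y gx gy := by
  intro A B hB hAB
  refine ⟨?_, ?_, ?_⟩
  · simp only [chainEval_eq_linearCombination]
    rw [← map_add, ← h1, Finsupp.linearCombination_single, one_smul]
  · exact chainEval_mem hset hb (Or.inl (x_mem_kxF St w x y)) (S_mem_kxF St w x y) hgx h2 hB hAB
  · exact chainEval_mem hset hb (Or.inr (y_mem_kyF St w x y)) (S_mem_kyF St w x y) hgy h3 hB hAB

end QuadrantWalk
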